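/- Let N ≥ 3, let V satisfy condition (V) and the decay condition that there exist A, α > 0 with V⁺(x) ≤ A|x|^{-2-α} for all x ∈ ℝ^N, let f satisfy conditions (f1), (f2), (f3), let λ > 0, and let u be a solution of problem (P_λ). Then the integrals ∫_{ℝ^N} |∇u|² dx and ∫_{ℝ^N} V(x)u² dx are finite and satisfy the strict inequality ∫_{ℝ^N} |∇u|² dx < λ ∫_{ℝ^N} V(x)u² dx. -/

import Mathlib

open MeasureTheory Filter Metric Set
open scoped ENNReal NNReal Topology

noncomputable section

/-- Euclidean space `ℝ^N`. -/
abbrev Euc (N : ℕ) := EuclideanSpace ℝ (Fin N)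

/-- The Laplace operator on `ℝ^N`: the sum of the second partial derivatives. -/
def lap (N : ℕ) (u : Euc N → ℝ) (x : Euc N) : ℝ :=
  ∑ i : Fin N,
    fderiv ℝ (fun y => fderiv ℝ u y (EuclideanSpace.single i 1)) x (EuclideanSpace.single i 1)

/-- The principal eigenvalue `λ₁(R)`: the infimum of `∫_{B_R} |∇u|²` over smooth functions
compactly supported in the open ball `B_R` with `∫_{B_R} V u² = 1`. -/
def lam1 (N : ℕ) (V : Euc N → ℝ) (R : ℝ) : ℝ :=
  sInf { t : ℝ | ∃ u : Euc N → ℝ, ContDiff ℝ (⊤ : ℕ∞) u ∧ HasCompactSupport u ∧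
    tsupport u ⊆ ball (0 : Euc N) R ∧
    (∫ x, V x * u x ^ 2) = 1 ∧ t = ∫ x, ‖gradient u x‖ ^ 2 }

/-- `Λ := lim_{R → ∞} λ₁(R)`. -/
def Lam (N : ℕ) (V : Euc N → ℝ) : ℝ := limUnder atTop (lam1 N V)

/-- Condition (V): `V` is a bounded Hölder-continuous function whose positive part
`V⁺ = max(V, 0)` is nontrivial and decomposes as `V₁ + V₂` with `V₁ ∈ L^{N/2}` and
`|x|² V₂(x) → 0` as `|x| → ∞`. -/
def CondV (N : ℕ) (V V₁ V₂ : Euc N → ℝ) : Prop :=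
  (∃ C β : ℝ≥0, 0 < β ∧ β ≤ 1 ∧ HolderWith C β V) ∧
  (∃ C : ℝ, ∀ x, |V x| ≤ C) ∧
  (∃ x, 0 < V x) ∧
  (∀ x, max (V x) 0 = V₁ x + V₂ x) ∧
  MemLp V₁ ((N : ℝ≥0∞) / 2) volume ∧
  Tendsto (fun x : Euc N => ‖x‖ ^ 2 * V₂ x) (cocompact _) (𝓝 0)

/-- The decay condition: `V⁺(x) ≤ A |x|^{-2-α}`. -/
def CondVDecay (N : ℕ) (V : Euc N → ℝ) : Prop :=
  ∃ A α : ℝ, 0 < A ∧ 0 < α ∧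
    ∀ x : Euc N, x ≠ 0 → max (V x) 0 ≤ A * ‖x‖ ^ (-2 - α)

/-- Conditions (f1), (f2), (f3) on the absorption term `f`. -/
def CondF (N : ℕ) (V : Euc N → ℝ) (f : ℝ → ℝ) : Prop :=
  ContDiff ℝ 1 f ∧ (∀ u : ℝ, 0 ≤ u → 0 ≤ f u) ∧
  -- (f1)
  f 0 = 0 ∧ deriv f 0 = 0 ∧
  0 < Filter.liminf (fun u : ℝ => ((deriv f u / u : ℝ) : EReal)) (𝓝[>] (0 : ℝ)) ∧
  -- (f2)
  StrictMonoOn (fun u : ℝ => f u / u) (Ioi 0) ∧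
  -- (f3)
  (∃ L : EReal, Tendsto (fun u : ℝ => ((f u / u : ℝ) : EReal)) atTop (𝓝 L) ∧
    ((⨆ x, |V x| : ℝ) : EReal) < L)

/-- A solution of problem `(P_λ)`: a positive `C²` function solving the logistic equation
and decaying to zero at infinity. -/
structure IsSolution (N : ℕ) (V : Euc N → ℝ) (f : ℝ → ℝ) (lam : ℝ) (u : Euc N → ℝ) : Prop where
  smooth : ContDiff ℝ 2 u
  pos : ∀ x, 0 < u x
  eqn : ∀ x, -lap N u x = lam * (V x * u x - f (u x))
  decay : Tendsto u (cocompact (Euc N)) (𝓝 0)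

/-- The surface integral `∫_{∂B_R} g dσ` over the sphere of radius `R`, written in polar
coordinates with respect to the canonical surface measure on the unit sphere. -/
def sphereInt (N : ℕ) (g : Euc N → ℝ) (R : ℝ) : ℝ :=
  ∫ ω : sphere (0 : Euc N) 1, g (R • (ω : Euc N)) * R ^ (N - 1)
    ∂((volume : Measure (Euc N)).toSphere)

/- Far out, `u` is a subsolution of `-Δ - c` for a potential `c = O(‖x‖ ^ (-2 - α))`, and there
`‖x‖ ^ (-β)` with `0 < β < N - 2` and `1 + ‖x‖ ^ (-γ)` with `γ` small are strict supersolutions.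
The first is compared with `u` by a maximum principle; the second does not decay, so it makes that
principle available for functions tending to `0` at infinity. Hence `u = O(‖x‖ ^ (-β))`, and for
`β > (N - 2) / 2` both `V⁺ u²` and `u² / (1 + ‖x‖²)` are integrable. Testing
`Δ (u²) = 2 (‖∇u‖² + u Δu)` against dilated cutoffs, whose Laplacians are `O(1 / (1 + ‖x‖²))`
uniformly, then gives `∫ ‖∇u‖² + lam ∫ f(u) u = lam ∫ V u²`, and the middle term is positive
because `f > 0` on `(0, ∞)`. -/

open Asymptotics InnerProductSpace Laplacian Module

section SecondDerivative

theorem deriv_deriv_nonpos_of_isLocalMax {f : ℝ → ℝ} {a : ℝ} (h : IsLocalMax f a)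
    (hf : ContinuousAt f a) : deriv (deriv f) a ≤ 0 := by
  by_contra! hpos
  have hmin : IsLocalMin f a := isLocalMin_of_deriv_deriv_pos hpos h.deriv_eq_zero hf
  have hconst : f =ᶠ[𝓝 a] fun _ => f a := by
    filter_upwards [h, hmin] with t using le_antisymm
  have hzero : deriv (deriv f) a = 0 := by simp [hconst.deriv.deriv_eq]
  exact hpos.ne' hzero

variable {E : Type*} [NormedAddCommGroup E] [NormedSpace ℝ E] {f : E → ℝ} {x : E}

theorem fderiv_fderiv_apply (hf : ContDiffAt ℝ 2 f x) (v w : E) :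
    fderiv ℝ (fun y => fderiv ℝ f y v) x w = fderiv ℝ (fderiv ℝ f) x w v := by
  have hf' : ContDiffAt ℝ 1 (fderiv ℝ f) x := hf.fderiv_right (by norm_num)
  simp [fderiv_clm_apply (hf'.differentiableAt one_ne_zero) (differentiableAt_const v)]

theorem deriv_deriv_comp_add_smul (hf : ContDiffAt ℝ 2 f x) (v : E) :
    deriv (deriv fun t : ℝ => f (x + t • v)) 0 = fderiv ℝ (fderiv ℝ f) x v v := by
  have hline (t : ℝ) : HasDerivAt (fun t : ℝ => x + t • v) v t := by
    simpa using ((hasDerivAt_id t).smul_const v).const_add x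
  have hline₀ : Tendsto (fun t : ℝ => x + t • v) (𝓝 0) (𝓝 x) := by
    simpa using (hline 0).continuousAt.tendsto
  have hderiv : deriv (fun t : ℝ => f (x + t • v)) =ᶠ[𝓝 0]
      fun t => fderiv ℝ f (x + t • v) v := by
    filter_upwards [hline₀.eventually (hf.eventually (by simp))] with t ht
    exact ((ht.differentiableAt two_ne_zero).hasFDerivAt.comp_hasDerivAt t (hline t)).deriv
  have hf' : HasFDerivAt (fun y => fderiv ℝ f y v) (fderiv ℝ (fun y => fderiv ℝ f y v) x)
      (x + (0 : ℝ) • v) := by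
    simpa using (((hf.fderiv_right (m := 1) (by norm_num)).differentiableAt one_ne_zero).clm_apply
      (differentiableAt_const v)).hasFDerivAt
  rw [hderiv.deriv_eq, ← fderiv_fderiv_apply hf]
  exact (hf'.comp_hasDerivAt (0 : ℝ) (hline 0)).deriv

theorem fderiv_fderiv_nonpos_of_isLocalMax (h : IsLocalMax f x) (hf : ContDiffAt ℝ 2 f x) (v : E) :
    fderiv ℝ (fderiv ℝ f) x v v ≤ 0 := by
  have hline : Tendsto (fun t : ℝ => x + t • v) (𝓝 0) (𝓝 x) := by
    have hcont : Continuous fun t : ℝ => x + t • v := by fun_prop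
    simpa using hcont.tendsto 0
  rw [← deriv_deriv_comp_add_smul hf]
  refine deriv_deriv_nonpos_of_isLocalMax ?_ ?_
  · filter_upwards [hline.eventually h] with t ht
    simpa using ht
  · simpa [ContinuousAt, Function.comp_def] using hf.continuousAt.tendsto.comp hline

theorem fderiv_fderiv_comp {g : ℝ → ℝ} (hg : ContDiffAt ℝ 2 g (f x)) (hf : ContDiffAt ℝ 2 f x)
    (v : E) : fderiv ℝ (fderiv ℝ fun y => g (f y)) x v v =
      deriv (deriv g) (f x) * fderiv ℝ f x v ^ 2 +
        deriv g (f x) * fderiv ℝ (fderiv ℝ f) x v v := by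
  have hchain : fderiv ℝ (fun y => g (f y)) =ᶠ[𝓝 x] fun y => deriv g (f y) • fderiv ℝ f y := by
    filter_upwards [hf.continuousAt.eventually (hg.eventually (by simp)),
      hf.eventually (by simp)] with y hgy hfy
    exact ((hgy.differentiableAt two_ne_zero).hasDerivAt.comp_hasFDerivAt y
      (hfy.differentiableAt two_ne_zero).hasFDerivAt).fderiv
  have hg' : HasFDerivAt (fun y => deriv g (f y)) (deriv (deriv g) (f x) • fderiv ℝ f x) x :=
    ((hg.derivWithin (m := 1) (by norm_num)).differentiableAt one_ne_zero).hasDerivAt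
      |>.comp_hasFDerivAt x (hf.differentiableAt two_ne_zero).hasFDerivAt
  have hf' : HasFDerivAt (fderiv ℝ f) (fderiv ℝ (fderiv ℝ f) x) x :=
    ((hf.fderiv_right (m := 1) (by norm_num)).differentiableAt one_ne_zero).hasFDerivAt
  rw [hchain.fderiv_eq, (hg'.fun_smul hf').fderiv]
  simp only [_root_.add_apply, _root_.smul_apply, ContinuousLinearMap.smulRight_apply, smul_eq_mul]
  ring

end SecondDerivative

section Laplacian

variable {E : Type*} [NormedAddCommGroup E] [InnerProductSpace ℝ E] {f : E → ℝ} {x : E}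

theorem contDiffAt_norm_rpow (p : ℝ) (hx : x ≠ 0) {n : WithTop ℕ∞} :
    ContDiffAt ℝ n (fun y : E => ‖y‖ ^ p) x :=
  (contDiffAt_norm ℝ hx).rpow_const_of_ne (norm_ne_zero_iff.2 hx)

variable [FiniteDimensional ℝ E]

theorem laplacian_eq_sum_fderiv_fderiv {ι : Type*} [Fintype ι] (b : OrthonormalBasis ι ℝ E)
    (f : E → ℝ) (x : E) : Δ f x = ∑ i, fderiv ℝ (fderiv ℝ f) x (b i) (b i) := by
  simp [laplacian_eq_iteratedFDeriv_orthonormalBasis f b, iteratedFDeriv_two_apply]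

theorem laplacian_nonpos_of_isLocalMax (h : IsLocalMax f x) (hf : ContDiffAt ℝ 2 f x) :
    Δ f x ≤ 0 := by
  rw [laplacian_eq_sum_fderiv_fderiv (stdOrthonormalBasis ℝ E)]
  exact Finset.sum_nonpos fun i _ => fderiv_fderiv_nonpos_of_isLocalMax h hf _

theorem norm_gradient_sq_eq_sum {ι : Type*} [Fintype ι] (b : OrthonormalBasis ι ℝ E)
    (f : E → ℝ) (x : E) : ‖gradient f x‖ ^ 2 = ∑ i, fderiv ℝ f x (b i) ^ 2 := by
  simp [← b.sum_sq_norm_inner_right (gradient f x), inner_gradient_right]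

theorem laplacian_comp {g : ℝ → ℝ} (hg : ContDiffAt ℝ 2 g (f x)) (hf : ContDiffAt ℝ 2 f x) :
    Δ (fun y => g (f y)) x =
      deriv (deriv g) (f x) * ‖gradient f x‖ ^ 2 + deriv g (f x) * Δ f x := by
  simp only [laplacian_eq_sum_fderiv_fderiv (stdOrthonormalBasis ℝ E),
    norm_gradient_sq_eq_sum (stdOrthonormalBasis ℝ E), fderiv_fderiv_comp hg hf,
    Finset.sum_add_distrib, Finset.mul_sum]

theorem laplacian_sq (hf : ContDiffAt ℝ 2 f x) :
    Δ (fun y => f y ^ 2) x = 2 * (‖gradient f x‖ ^ 2 + f x * Δ f x) := by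
  have hderiv : deriv (fun t : ℝ => t ^ 2) = fun t => 2 * t := by
    ext t
    simp
  rw [laplacian_comp (g := fun t => t ^ 2) (contDiff_id.pow 2).contDiffAt hf, hderiv,
    deriv_const_mul_field, deriv_id'']
  ring

theorem laplacian_norm_sq (x : E) : Δ (fun y : E => ‖y‖ ^ 2) x = 2 * finrank ℝ E := by
  have hfderiv : fderiv ℝ (fun y : E => ‖y‖ ^ 2) = ⇑(2 • innerSL ℝ : E →L[ℝ] E →L[ℝ] ℝ) := by
    simp [fderiv_norm_sq]
  rw [laplacian_eq_sum_fderiv_fderiv (stdOrthonormalBasis ℝ E), hfderiv,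
    ContinuousLinearMap.fderiv]
  simp [innerSL_apply_apply ℝ, mul_comm]

theorem gradient_norm_sq (x : E) : gradient (fun y : E => ‖y‖ ^ 2) x = (2 : ℝ) • x := by
  refine ext_inner_right ℝ fun v => ?_
  simp [inner_gradient_left, real_inner_smul_left]

theorem laplacian_norm_rpow (p : ℝ) (hx : x ≠ 0) :
    Δ (fun y : E => ‖y‖ ^ p) x = p * (p + finrank ℝ E - 2) * ‖x‖ ^ (p - 2) := by
  have hpow (y : E) (q : ℝ) : (‖y‖ ^ 2) ^ (q / 2) = ‖y‖ ^ q := by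
    rw [← Real.rpow_natCast_mul (norm_nonneg y)]
    congr 1
    push_cast
    ring
  have hx' : ‖x‖ ^ 2 ≠ 0 := pow_ne_zero _ (norm_ne_zero_iff.2 hx)
  have hp : p / 2 - 1 = (p - 2) / 2 := by ring
  have hp' : (p - 2) / 2 - 1 = (p - 4) / 2 := by ring
  have hpow_sub : ‖x‖ ^ (p - 4) * ‖x‖ ^ 2 = ‖x‖ ^ (p - 2) := by
    rw [← Real.rpow_add_natCast (norm_ne_zero_iff.2 hx)]
    congr 1
    push_cast
    ring
  have hsq : ContDiff ℝ 2 fun y : E => ‖y‖ ^ 2 := contDiff_norm_sq ℝ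
  simp only [← hpow _ p]
  rw [laplacian_comp (f := fun y : E => ‖y‖ ^ 2) (g := fun t => t ^ (p / 2))
    (Real.contDiffAt_rpow_const_of_ne hx') hsq.contDiffAt, gradient_norm_sq, laplacian_norm_sq,
    norm_smul]
  simp only [Real.deriv_rpow_const', deriv_const_mul_field', hp, hp', hpow, Real.norm_ofNat]
  linear_combination p * (p - 2) * hpow_sub

theorem laplacian_comp_smul (hf : ContDiff ℝ 2 f) (c : ℝ) (x : E) :
    Δ (fun y => f (c • y)) x = c ^ 2 * Δ f (c • x) := by
  simp only [laplacian_eq_iteratedFDeriv_stdOrthonormalBasis,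
    iteratedFDeriv_comp_const_smul (i := 2) c hf, smul_apply, smul_eq_mul,
    Finset.mul_sum]

theorem continuous_laplacian (hf : ContDiff ℝ 2 f) : Continuous (Δ f) := by
  rw [laplacian_eq_iteratedFDeriv_stdOrthonormalBasis]
  have := hf.continuous_iteratedFDeriv'
  fun_prop

theorem hasCompactSupport_laplacian (hf : HasCompactSupport f) : HasCompactSupport (Δ f) := by
  refine (hf.iteratedFDeriv (𝕜 := ℝ) 2).mono fun x hx => ?_
  contrapose! hx
  simp only [Function.mem_support, not_not] at hx
  simp [laplacian_eq_iteratedFDeriv_stdOrthonormalBasis, hx]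

end Laplacian

theorem lap_eq_laplacian {N : ℕ} {u : Euc N → ℝ} (hu : ContDiff ℝ 2 u) : lap N u = Δ u := by
  ext x
  simp only [lap, laplacian_eq_sum_fderiv_fderiv (EuclideanSpace.basisFun (Fin N) ℝ),
    EuclideanSpace.basisFun_apply, fderiv_fderiv_apply hu.contDiffAt]

theorem tendsto_norm_rpow_neg_cocompact {E : Type*} [SeminormedAddGroup E] [ProperSpace E] {p : ℝ}
    (hp : 0 < p) : Tendsto (fun x : E => ‖x‖ ^ (-p)) (cocompact E) (𝓝 0) :=
  (tendsto_rpow_neg_atTop hp).comp tendsto_norm_cocompact_atTop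

theorem isLittleO_norm_rpow_norm_rpow {E : Type*} [SeminormedAddGroup E] [ProperSpace E]
    {p q : ℝ} (hpq : p < q) :
    (fun x : E => ‖x‖ ^ p) =o[cocompact E] fun x => ‖x‖ ^ q := by
  have hratio : Tendsto (fun r : ℝ => r ^ p / r ^ q) atTop (𝓝 0) := by
    refine (tendsto_rpow_neg_atTop (sub_pos.2 hpq)).congr' ?_
    filter_upwards [eventually_gt_atTop 0] with r hr
    rw [← Real.rpow_sub hr, neg_sub]
  have hreal : (fun r : ℝ => r ^ p) =o[atTop] fun r => r ^ q := by
    refine (isLittleO_iff_tendsto' ?_).2 hratio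
    filter_upwards [eventually_gt_atTop 0] with r hr h
    exact absurd h (Real.rpow_pos_of_pos hr q).ne'
  exact hreal.comp_tendsto (tendsto_norm_cocompact_atTop (E := E))

theorem exists_pos_forall_of_eventually_cocompact {E : Type*} [SeminormedAddGroup E] [ProperSpace E]
    {p : E → Prop} (h : ∀ᶠ x in cocompact E, p x) : ∃ R > 0, ∀ x, R ≤ ‖x‖ → p x := by
  rw [← Metric.cobounded_eq_cocompact, ← comap_norm_atTop] at h
  obtain ⟨R, -, hR⟩ := (atTop_basis.comap _).eventually_iff.1 h
  exact ⟨max R 1, by positivity, fun x hx => hR ((le_max_left _ _).trans hx)⟩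

section Comparison

variable {E : Type*} [NormedAddCommGroup E] [InnerProductSpace ℝ E] [FiniteDimensional ℝ E]

-- If `v / W` had a maximum `t > 0`, then `t • W`, again a strict supersolution, would touch `v`
-- from above there.
theorem nonpos_of_neg_laplacian_le_mul {s : Set E} {v W c : E → ℝ} (hs : IsClosed s)
    (hv : ContinuousOn v s) (hW : ContinuousOn W s)
    (hv₂ : ∀ x ∈ interior s, ContDiffAt ℝ 2 v x) (hW₂ : ∀ x ∈ interior s, ContDiffAt ℝ 2 W x)
    (hW_pos : ∀ x ∈ s, 0 < W x) (hv_le : ∀ x ∈ interior s, -Δ v x ≤ c x * v x)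
    (hW_lt : ∀ x ∈ interior s, c x * W x < -Δ W x) (hfrontier : ∀ x ∈ frontier s, v x ≤ 0)
    (hlim : Tendsto (fun x => v x / W x) (cocompact E ⊓ 𝓟 s) (𝓝 0)) {x : E} (hx : x ∈ s) :
    v x ≤ 0 := by
  by_contra! hvx
  obtain ⟨y, hy, hmax⟩ := (hv.div hW fun z hz => (hW_pos z hz).ne').exists_isMaxOn' hs hx
    (hlim.eventually_le_const (div_pos hvx (hW_pos x hx)))
  set t := v y / W y
  have htpos : 0 < t := (div_pos hvx (hW_pos x hx)).trans_le (hmax hx)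
  have hvy : v y = t * W y := (div_mul_cancel₀ _ (hW_pos y hy).ne').symm
  have hy_int : y ∈ interior s := by
    refine (self_sdiff_frontier s).subset ⟨hy, fun hfr => (hfrontier y hfr).not_gt ?_⟩
    exact hvy ▸ mul_pos htpos (hW_pos y hy)
  have hlocal : IsLocalMax (v - t • W) y := by
    filter_upwards [mem_interior_iff_mem_nhds.1 hy_int] with z hz
    have : v z ≤ t * W z := (div_le_iff₀ (hW_pos z hz)).1 (hmax hz)
    simpa [hvy] using this
  have hΔ : Δ v y ≤ t * Δ W y := by
    have htW : ContDiffAt ℝ 2 (t • W) y := (hW₂ y hy_int).const_smul t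
    have hΔ_sub := laplacian_nonpos_of_isLocalMax hlocal ((hv₂ y hy_int).sub htW)
    rw [(hv₂ y hy_int).laplacian_sub htW, laplacian_smul t (hW₂ y hy_int), smul_eq_mul] at hΔ_sub
    linarith
  have hΔv := hv_le y hy_int
  have hΔW := mul_lt_mul_of_pos_left (hW_lt y hy_int) htpos
  rw [hvy] at hΔv
  linarith

theorem exists_forall_le_mul_of_neg_laplacian_le_mul {s : Set E} {u w W c : E → ℝ}
    (hs : IsClosed s) (hfrontier : IsCompact (frontier s)) (hu : ∀ x ∈ s, ContDiffAt ℝ 2 u x)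
    (hw : ∀ x ∈ s, ContDiffAt ℝ 2 w x) (hW : ∀ x ∈ s, ContDiffAt ℝ 2 W x)
    (hw_pos : ∀ x ∈ s, 0 < w x) (hW_pos : ∀ x ∈ s, 0 < W x)
    (hu_le : ∀ x ∈ s, -Δ u x ≤ c x * u x) (hw_le : ∀ x ∈ s, c x * w x ≤ -Δ w x)
    (hW_lt : ∀ x ∈ s, c x * W x < -Δ W x)
    (hu_lim : Tendsto (fun x => u x / W x) (cocompact E ⊓ 𝓟 s) (𝓝 0))
    (hw_lim : Tendsto (fun x => w x / W x) (cocompact E ⊓ 𝓟 s) (𝓝 0)) :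
    ∃ C, ∀ x ∈ s, u x ≤ C * w x := by
  have hsub : interior s ⊆ s := interior_subset
  have hcont {f : E → ℝ} (hf : ∀ x ∈ s, ContDiffAt ℝ 2 f x) : ContinuousOn f s :=
    fun x hx => (hf x hx).continuousAt.continuousWithinAt
  obtain ⟨C, hC⟩ := hfrontier.exists_bound_of_continuousOn (f := fun x => u x / w x) <|
    ((hcont hu).div (hcont hw) fun x hx => (hw_pos x hx).ne').mono hs.frontier_subset
  have hCw (x : E) (hx : x ∈ s) : ContDiffAt ℝ 2 (|C| • w) x := (hw x hx).const_smul |C|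
  have hΔ (x : E) (hx : x ∈ s) : Δ (u - |C| • w) x = Δ u x - |C| * Δ w x := by
    rw [(hu x hx).laplacian_sub (hCw x hx), laplacian_smul _ (hw x hx), smul_eq_mul]
  have hv (x : E) (hx : x ∈ s) : ContDiffAt ℝ 2 (u - |C| • w) x := (hu x hx).sub (hCw x hx)
  refine ⟨|C|, fun x hx => sub_nonpos.1 ?_⟩
  refine nonpos_of_neg_laplacian_le_mul (v := u - |C| • w) hs (hcont hv) (hcont hW)
    (fun y hy => hv y (hsub hy)) (fun y hy => hW y (hsub hy)) hW_pos (fun y hy => ?_)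
    (fun y hy => hW_lt y (hsub hy)) (fun y hy => ?_) ?_ hx
  · have hCw_le := mul_le_mul_of_nonneg_left (hw_le y (hsub hy)) (abs_nonneg C)
    simp only [hΔ y (hsub hy), Pi.sub_apply, Pi.smul_apply, smul_eq_mul]
    linarith [hu_le y (hsub hy)]
  · have hle : u y / w y ≤ |C| := (Real.le_norm_self _).trans ((hC y hy).trans (le_abs_self C))
    exact sub_nonpos.2 ((div_le_iff₀ (hw_pos y (hs.frontier_subset hy))).1 hle)
  · simpa [sub_div, mul_div_assoc] using hu_lim.sub (hw_lim.const_mul |C|)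

theorem eventually_lt_neg_laplacian_norm_rpow {γ : ℝ} (hγ : 0 < γ) (hγ' : γ < finrank ℝ E - 2)
    {g : E → ℝ} (hg : g =o[cocompact E] fun x => ‖x‖ ^ (-γ - 2)) :
    ∀ᶠ x in cocompact E, g x < -Δ (fun y : E => ‖y‖ ^ (-γ)) x := by
  have hκ : 0 < γ * (finrank ℝ E - 2 - γ) := mul_pos hγ (sub_pos.2 hγ')
  have hnorm : ∀ᶠ x : E in cocompact E, 0 < ‖x‖ :=
    tendsto_norm_cocompact_atTop.eventually_gt_atTop 0
  filter_upwards [hg.bound (half_pos hκ), hnorm] with x hgx hx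
  rw [laplacian_norm_rpow _ (norm_pos_iff.1 hx)]
  have hpow : 0 < ‖x‖ ^ (-γ - 2) := Real.rpow_pos_of_pos hx _
  rw [Real.norm_of_nonneg hpow.le] at hgx
  have := (Real.le_norm_self _).trans hgx
  nlinarith [mul_pos hκ hpow]

theorem exists_forall_le_mul_norm_rpow {u c : E → ℝ} {R β γ : ℝ} (hR : 0 < R) (hβ : 0 < β)
    (hγ : 0 < γ) (hu : ContDiff ℝ 2 u) (hu_lim : Tendsto u (cocompact E) (𝓝 0))
    (hΔ : ∀ x, R ≤ ‖x‖ → -Δ u x ≤ c x * u x)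
    (hβΔ : ∀ x, R ≤ ‖x‖ → c x * ‖x‖ ^ (-β) < -Δ (fun y : E => ‖y‖ ^ (-β)) x)
    (hγΔ : ∀ x, R ≤ ‖x‖ → c x * (1 + ‖x‖ ^ (-γ)) < -Δ (fun y : E => ‖y‖ ^ (-γ)) x) :
    ∃ C, ∀ x, R ≤ ‖x‖ → u x ≤ C * ‖x‖ ^ (-β) := by
  have hs : {x : E | R ≤ ‖x‖} = (ball 0 R)ᶜ := by ext; simp
  have hpos {x : E} (hx : R ≤ ‖x‖) : 0 < ‖x‖ := hR.trans_le hx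
  have hpow (p : ℝ) {x : E} (hx : R ≤ ‖x‖) : ContDiffAt ℝ 2 (fun y : E => ‖y‖ ^ p) x :=
    contDiffAt_norm_rpow p (norm_pos_iff.1 (hpos hx))
  have hdiv_lim {v : E → ℝ} (hv : Tendsto v (cocompact E) (𝓝 0)) :
      Tendsto (fun x => v x / (1 + ‖x‖ ^ (-γ))) (cocompact E ⊓ 𝓟 {x | R ≤ ‖x‖}) (𝓝 0) := by
    have := hv.div ((tendsto_norm_rpow_neg_cocompact (E := E) hγ).const_add 1) (by norm_num)
    simpa using! this.mono_left inf_le_left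
  have hpow_pos (p : ℝ) {x : E} (hx : R ≤ ‖x‖) : 0 < ‖x‖ ^ p := Real.rpow_pos_of_pos (hpos hx) p
  refine exists_forall_le_mul_of_neg_laplacian_le_mul (s := {x | R ≤ ‖x‖}) (c := c)
    (w := fun x => ‖x‖ ^ (-β)) (W := fun x => 1 + ‖x‖ ^ (-γ))
    (isClosed_le continuous_const continuous_norm) ?_ (fun _ _ => hu.contDiffAt)
    (fun _ hx => hpow _ hx) (fun _ hx => contDiffAt_const.add (hpow _ hx))
    (fun _ hx => hpow_pos _ hx) (fun _ hx => add_pos one_pos (hpow_pos _ hx)) hΔ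
    (fun x hx => (hβΔ x hx).le) (fun x hx => ?_)
    (hdiv_lim hu_lim) (hdiv_lim (tendsto_norm_rpow_neg_cocompact hβ))
  · rw [hs, frontier_compl, frontier_ball _ hR.ne']
    exact isCompact_sphere _ _
  · have hΔW : Δ (fun y : E => 1 + ‖y‖ ^ (-γ)) x = Δ (fun y : E => ‖y‖ ^ (-γ)) x := by
      simpa using! contDiffAt_const.laplacian_add (f₁ := fun _ => (1 : ℝ)) (hpow (-γ) hx)
    exact hΔW ▸ hγΔ x hx

theorem isBigO_norm_rpow_of_neg_laplacian_le {u c : E → ℝ} {a β : ℝ} (hu : ContDiff ℝ 2 u)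
    (hu_nonneg : 0 ≤ u) (hu_lim : Tendsto u (cocompact E) (𝓝 0)) (ha : 0 < a)
    (hc : c =O[cocompact E] fun x => ‖x‖ ^ (-2 - a)) (hβ : 0 < β) (hβ' : β < finrank ℝ E - 2)
    (hΔ : ∀ᶠ x in cocompact E, -Δ u x ≤ c x * u x) :
    u =O[cocompact E] fun x => ‖x‖ ^ (-β) := by
  obtain ⟨γ, hγ, hγ_lt⟩ : ∃ γ, 0 < γ ∧ γ < min a β := exists_between (lt_min ha hβ)
  have hγa : γ < a := hγ_lt.trans_le (min_le_left _ _)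
  have hγβ : γ < β := hγ_lt.trans_le (min_le_right _ _)
  have hnorm : ∀ᶠ x in cocompact E, 0 < ‖x‖ := tendsto_norm_cocompact_atTop.eventually_gt_atTop 0
  have hβΔ : ∀ᶠ x in cocompact E, c x * ‖x‖ ^ (-β) < -Δ (fun y : E => ‖y‖ ^ (-β)) x := by
    refine eventually_lt_neg_laplacian_norm_rpow hβ hβ' ?_
    refine ((hc.mul (isBigO_refl _ _)).congr' .rfl ?_).trans_isLittleO
      (isLittleO_norm_rpow_norm_rpow (p := -2 - a + -β) (by linarith))
    filter_upwards [hnorm] with x hx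
    rw [Real.rpow_add hx]
  have hγΔ : ∀ᶠ x in cocompact E, c x * (1 + ‖x‖ ^ (-γ)) < -Δ (fun y : E => ‖y‖ ^ (-γ)) x := by
    refine eventually_lt_neg_laplacian_norm_rpow hγ (hγβ.trans hβ') ?_
    have hW : (fun x : E => 1 + ‖x‖ ^ (-γ)) =O[cocompact E] fun _ => (1 : ℝ) :=
      (tendsto_norm_rpow_neg_cocompact hγ).const_add 1 |>.isBigO_one ℝ
    simpa using (hc.mul hW).trans_isLittleO
      (by simpa using isLittleO_norm_rpow_norm_rpow (p := -2 - a) (by linarith))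
  obtain ⟨R, hR, hfar⟩ := exists_pos_forall_of_eventually_cocompact (hΔ.and (hβΔ.and hγΔ))
  obtain ⟨C, hC⟩ := exists_forall_le_mul_norm_rpow hR hβ hγ hu hu_lim
    (fun x hx => (hfar x hx).1) (fun x hx => (hfar x hx).2.1) fun x hx => (hfar x hx).2.2
  refine .of_bound C ?_
  filter_upwards [tendsto_norm_cocompact_atTop.eventually_ge_atTop R] with x hx
  rw [Real.norm_of_nonneg (hu_nonneg x), Real.norm_of_nonneg (Real.rpow_nonneg (norm_nonneg x) _)]
  exact hC x hx

end Comparison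

section ApproximateUnit

variable {α : Type*} {mα : MeasurableSpace α} {μ : Measure α} {h : α → ℝ} {φ : ℕ → α → ℝ}

theorem tendsto_integral_mul_of_tendsto_one (hφ : ∀ n, AEStronglyMeasurable (φ n) μ)
    (hφ_mem : ∀ n x, φ n x ∈ Icc 0 1) (hφ_lim : ∀ x, Tendsto (φ · x) atTop (𝓝 1))
    (hh : Integrable h μ) :
    Tendsto (fun n => ∫ x, h x * φ n x ∂μ) atTop (𝓝 (∫ x, h x ∂μ)) := by
  refine tendsto_integral_of_dominated_convergence (fun x => ‖h x‖)
    (fun n => hh.aestronglyMeasurable.mul (hφ n)) hh.norm (fun n => .of_forall fun x => ?_)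
    (.of_forall fun x => by simpa using (hφ_lim x).const_mul (h x))
  rw [norm_mul, Real.norm_of_nonneg (hφ_mem n x).1]
  exact mul_le_of_le_one_right (norm_nonneg _) (hφ_mem n x).2

theorem integrable_and_integral_eq_of_tendsto_integral_mul {L : ℝ} (hh : 0 ≤ h)
    (hφ : ∀ n, AEStronglyMeasurable (φ n) μ) (hφ_mem : ∀ n x, φ n x ∈ Icc 0 1)
    (hφ_lim : ∀ x, Tendsto (φ · x) atTop (𝓝 1)) (hint : ∀ n, Integrable (fun x => h x * φ n x) μ)
    (hlim : Tendsto (fun n => ∫ x, h x * φ n x ∂μ) atTop (𝓝 L)) :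
    Integrable h μ ∧ ∫ x, h x ∂μ = L := by
  have hprod_lim (x : α) : Tendsto (fun n => h x * φ n x) atTop (𝓝 (h x)) := by
    simpa using (hφ_lim x).const_mul (h x)
  have hlintegral (n : ℕ) : ∫⁻ x, ‖h x * φ n x‖ₑ ∂μ = ENNReal.ofReal (∫ x, h x * φ n x ∂μ) := by
    rw [← ofReal_integral_norm_eq_lintegral_enorm (hint n)]
    congr with x
    exact Real.norm_of_nonneg (mul_nonneg (hh x) (hφ_mem n x).1)
  have hfatou : ∫⁻ x, ‖h x‖ₑ ∂μ ≤ ENNReal.ofReal L :=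
    calc ∫⁻ x, ‖h x‖ₑ ∂μ
        = ∫⁻ x, liminf (fun n => ‖h x * φ n x‖ₑ) atTop ∂μ :=
          lintegral_congr fun x => (hprod_lim x).enorm.liminf_eq.symm
      _ ≤ liminf (fun n => ∫⁻ x, ‖h x * φ n x‖ₑ ∂μ) atTop :=
          lintegral_liminf_le' fun n => (hint n).aestronglyMeasurable.aemeasurable.enorm
      _ = ENNReal.ofReal L := by
          simpa only [hlintegral] using (ENNReal.tendsto_ofReal hlim).liminf_eq
  have hh_int : Integrable h μ :=
    ⟨aestronglyMeasurable_of_tendsto_ae atTop (fun n => (hint n).aestronglyMeasurable)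
      (.of_forall hprod_lim), hfatou.trans_lt ENNReal.ofReal_lt_top⟩
  exact ⟨hh_int, tendsto_nhds_unique
    (tendsto_integral_mul_of_tendsto_one hφ hφ_mem hφ_lim hh_int) hlim⟩

end ApproximateUnit

section Green

variable {E : Type*} [NormedAddCommGroup E] [MeasurableSpace E] [BorelSpace E]
  {μ : Measure E}

theorem integral_mul_fderiv_eq_neg_of_hasCompactSupport [NormedSpace ℝ E] [FiniteDimensional ℝ E]
    [μ.IsAddHaarMeasure] {f g : E → ℝ} (hf : ContDiff ℝ 1 f) (hg : ContDiff ℝ 1 g)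
    (hg_supp : HasCompactSupport g) (v : E) :
    ∫ x, f x * fderiv ℝ g x v ∂μ = -∫ x, fderiv ℝ f x v * g x ∂μ := by
  have hf' : Continuous fun x => fderiv ℝ f x v :=
    (hf.continuous_fderiv one_ne_zero).clm_apply continuous_const
  have hg' : Continuous fun x => fderiv ℝ g x v :=
    (hg.continuous_fderiv one_ne_zero).clm_apply continuous_const
  exact integral_mul_fderiv_eq_neg_fderiv_mul_of_integrable
    ((hf'.mul hg.continuous).integrable_of_hasCompactSupport hg_supp.mul_left)
    ((hf.continuous.mul hg').integrable_of_hasCompactSupport (hg_supp.fderiv_apply ℝ v).mul_left)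
    ((hf.continuous.mul hg.continuous).integrable_of_hasCompactSupport hg_supp.mul_left)
    (fun x _ => hf.differentiable one_ne_zero x) fun x _ => hg.differentiable one_ne_zero x

theorem integral_mul_laplacian [InnerProductSpace ℝ E] [FiniteDimensional ℝ E]
    [μ.IsAddHaarMeasure] {w φ : E → ℝ} (hw : ContDiff ℝ 2 w) (hφ : ContDiff ℝ 2 φ)
    (hφ_supp : HasCompactSupport φ) :
    ∫ x, w x * Δ φ x ∂μ = ∫ x, Δ w x * φ x ∂μ := by
  set b := stdOrthonormalBasis ℝ E
  have hdir {f : E → ℝ} (hf : ContDiff ℝ 2 f) (v : E) : ContDiff ℝ 1 fun x => fderiv ℝ f x v :=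
    (hf.fderiv_right (by norm_num)).clm_apply contDiff_const
  have hdir₂ {f : E → ℝ} (hf : ContDiff ℝ 2 f) (v : E) :
      Continuous fun x => fderiv ℝ (fun y => fderiv ℝ f y v) x v :=
    ((hdir hf v).continuous_fderiv one_ne_zero).clm_apply continuous_const
  have hΔ {f : E → ℝ} (hf : ContDiff ℝ 2 f) (x : E) :
      Δ f x = ∑ i, fderiv ℝ (fun y => fderiv ℝ f y (b i)) x (b i) := by
    simp only [laplacian_eq_sum_fderiv_fderiv b, fderiv_fderiv_apply hf.contDiffAt]
  have hleft_int (v : E) :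
      Integrable (fun x => w x * fderiv ℝ (fun y => fderiv ℝ φ y v) x v) μ :=
    (hw.continuous.mul (hdir₂ hφ v)).integrable_of_hasCompactSupport
      ((hφ_supp.fderiv_apply ℝ v).fderiv_apply ℝ v).mul_left
  have hright_int (v : E) :
      Integrable (fun x => fderiv ℝ (fun y => fderiv ℝ w y v) x v * φ x) μ :=
    ((hdir₂ hw v).mul hφ.continuous).integrable_of_hasCompactSupport hφ_supp.mul_left
  simp only [hΔ hw, hΔ hφ, Finset.mul_sum, Finset.sum_mul]
  rw [integral_finsetSum _ fun i _ => hleft_int (b i),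
    integral_finsetSum _ fun i _ => hright_int (b i)]
  refine Finset.sum_congr rfl fun i _ => ?_
  rw [integral_mul_fderiv_eq_neg_of_hasCompactSupport (hw.of_le one_le_two) (hdir hφ (b i))
      (hφ_supp.fderiv_apply ℝ _),
    integral_mul_fderiv_eq_neg_of_hasCompactSupport (hdir hw (b i)) (hφ.of_le one_le_two) hφ_supp,
    neg_neg]

end Green

section Cutoff

theorem tendsto_one_div_add_one_smul_zero {E : Type*} [AddCommMonoid E] [Module ℝ E]
    [TopologicalSpace E] [ContinuousSMul ℝ E] (x : E) :
    Tendsto (fun n : ℕ => (1 / ((n : ℝ) + 1)) • x) atTop (𝓝 0) := by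
  simpa using (tendsto_one_div_add_atTop_nhds_zero_nat (𝕜 := ℝ)).smul_const x

variable (E : Type*) [NormedAddCommGroup E] [InnerProductSpace ℝ E] [FiniteDimensional ℝ E]

/-- A bump function that is `1` on the unit ball and `0` off the ball of radius `2`, the profile of
the cutoff functions `cutoff E n`. -/
def unitBump : ContDiffBump (0 : E) := ⟨1, 2, one_pos, one_lt_two⟩

/-- A sequence of smooth cutoff functions with values in `[0, 1]`: the dilations of one bump
function by the factors `n + 1`. -/
def cutoff (n : ℕ) (x : E) : ℝ := unitBump E ((1 / ((n : ℝ) + 1)) • x)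

theorem contDiff_cutoff (n : ℕ) {k : ℕ∞} : ContDiff ℝ k (cutoff E n) :=
  (unitBump E).contDiff.comp (contDiff_const_smul (1 / ((n : ℝ) + 1)))

theorem hasCompactSupport_cutoff (n : ℕ) : HasCompactSupport (cutoff E n) :=
  (unitBump E).hasCompactSupport.comp_smul Nat.one_div_pos_of_nat.ne'

variable {E}

theorem cutoff_mem_Icc (n : ℕ) (x : E) : cutoff E n x ∈ Icc (0 : ℝ) 1 :=
  ⟨(unitBump E).nonneg, (unitBump E).le_one⟩

theorem tendsto_cutoff (x : E) : Tendsto (fun n => cutoff E n x) atTop (𝓝 1) := by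
  refine tendsto_const_nhds.congr' ?_
  have hball : closedBall (0 : E) 1 ∈ 𝓝 0 := closedBall_mem_nhds _ one_pos
  filter_upwards [(tendsto_one_div_add_one_smul_zero x).eventually_mem hball] with n hn
  exact ((unitBump E).one_of_mem_closedBall hn).symm

theorem laplacian_cutoff (n : ℕ) (x : E) :
    Δ (cutoff E n) x = (1 / ((n : ℝ) + 1)) ^ 2 * Δ (cutoff E 0) ((1 / ((n : ℝ) + 1)) • x) := by
  have hdil : (cutoff E n) = fun y => cutoff E 0 ((1 / ((n : ℝ) + 1)) • y) := by
    ext y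
    simp [cutoff]
  rw [hdil, laplacian_comp_smul (contDiff_cutoff E 0)]

theorem tendsto_laplacian_cutoff (x : E) : Tendsto (fun n => Δ (cutoff E n) x) atTop (𝓝 0) := by
  have hΔ : Continuous (Δ (cutoff E 0)) := continuous_laplacian (contDiff_cutoff E 0)
  refine Tendsto.congr (fun n => (laplacian_cutoff n x).symm) ?_
  simpa using (tendsto_one_div_add_atTop_nhds_zero_nat.pow 2).mul
    ((hΔ.tendsto 0).comp (tendsto_one_div_add_one_smul_zero x))

variable (E) in
theorem exists_forall_abs_laplacian_cutoff_le :
    ∃ K, ∀ n (x : E), |Δ (cutoff E n) x| ≤ K / (1 + ‖x‖ ^ 2) := by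
  have hcont : Continuous fun x : E => (1 + ‖x‖ ^ 2) * Δ (cutoff E 0) x :=
    (by fun_prop : Continuous fun x : E => 1 + ‖x‖ ^ 2).mul
      (continuous_laplacian (contDiff_cutoff E 0))
  obtain ⟨K, hK⟩ := (hasCompactSupport_laplacian
    (hasCompactSupport_cutoff E 0)).mul_left.exists_bound_of_continuous hcont
  refine ⟨K, fun n x => ?_⟩
  set r : ℝ := 1 / ((n : ℝ) + 1)
  have hr_pos : 0 < r := Nat.one_div_pos_of_nat
  have hr_le : r ^ 2 ≤ 1 := pow_le_one₀ hr_pos.le (div_le_one_of_le₀ (by simp) (by positivity))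
  rw [le_div_iff₀ (by positivity), laplacian_cutoff, abs_mul, abs_of_nonneg (sq_nonneg _)]
  calc r ^ 2 * |Δ (cutoff E 0) (r • x)| * (1 + ‖x‖ ^ 2)
      = (r ^ 2 + (r * ‖x‖) ^ 2) * |Δ (cutoff E 0) (r • x)| := by ring
    _ ≤ (1 + (r * ‖x‖) ^ 2) * |Δ (cutoff E 0) (r • x)| := by gcongr
    _ = ‖(1 + ‖r • x‖ ^ 2) * Δ (cutoff E 0) (r • x)‖ := by
      rw [norm_smul, norm_mul, Real.norm_of_nonneg (by positivity), Real.norm_of_nonneg hr_pos.le,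
        Real.norm_eq_abs]
    _ ≤ K := hK _

variable [MeasurableSpace E] [BorelSpace E] {μ : Measure E} {w P : E → ℝ}

theorem tendsto_integral_mul_laplacian_cutoff (hw : Continuous w)
    (hw_int : Integrable (fun x => w x / (1 + ‖x‖ ^ 2)) μ) :
    Tendsto (fun n => ∫ x, w x * Δ (cutoff E n) x ∂μ) atTop (𝓝 0) := by
  obtain ⟨K, hK⟩ := exists_forall_abs_laplacian_cutoff_le E
  have hbound (n : ℕ) (x : E) : ‖w x * Δ (cutoff E n) x‖ ≤ K * ‖w x / (1 + ‖x‖ ^ 2)‖ :=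
    calc ‖w x * Δ (cutoff E n) x‖ = ‖w x‖ * |Δ (cutoff E n) x| := norm_mul _ _
      _ ≤ ‖w x‖ * (K / (1 + ‖x‖ ^ 2)) := by gcongr; exact hK n x
      _ = K * ‖w x / (1 + ‖x‖ ^ 2)‖ := by
        rw [norm_div, Real.norm_of_nonneg (by positivity : 0 ≤ 1 + ‖x‖ ^ 2)]
        ring
  simpa using tendsto_integral_of_dominated_convergence _
    (fun n => (hw.mul (continuous_laplacian (contDiff_cutoff E n))).aestronglyMeasurable)
    (hw_int.norm.const_mul K) (fun n => .of_forall (hbound n))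
    (.of_forall fun x => (tendsto_laplacian_cutoff x).const_mul (w x))

theorem integrable_laplacian_and_integral_eq_zero [μ.IsAddHaarMeasure] (hw : ContDiff ℝ 2 w)
    (hw_int : Integrable (fun x => w x / (1 + ‖x‖ ^ 2)) μ) (hP : Integrable P μ)
    (hP_le : P ≤ Δ w) : Integrable (Δ w) μ ∧ ∫ x, Δ w x ∂μ = 0 := by
  have hcut (n : ℕ) : AEStronglyMeasurable (cutoff E n) μ :=
    (contDiff_cutoff E n (k := 0)).continuous.aestronglyMeasurable
  have hΔ_int (n : ℕ) : Integrable (fun x => Δ w x * cutoff E n x) μ :=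
    ((continuous_laplacian hw).mul
      (contDiff_cutoff E n (k := 0)).continuous).integrable_of_hasCompactSupport
        (hasCompactSupport_cutoff E n).mul_left
  have hP_int (n : ℕ) : Integrable (fun x => P x * cutoff E n x) μ :=
    hP.mul_bdd (c := 1) (hcut n) (.of_forall fun x => by
      simpa [abs_of_nonneg (cutoff_mem_Icc n x).1] using (cutoff_mem_Icc n x).2)
  have hdiff (n : ℕ) : ∫ x, (Δ w x - P x) * cutoff E n x ∂μ =
      ∫ x, w x * Δ (cutoff E n) x ∂μ - ∫ x, P x * cutoff E n x ∂μ := by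
    rw [integral_mul_laplacian hw (contDiff_cutoff E n) (hasCompactSupport_cutoff E n),
      ← integral_sub (hΔ_int n) (hP_int n)]
    simp only [sub_mul]
  obtain ⟨hint, hintegral⟩ := integrable_and_integral_eq_of_tendsto_integral_mul (μ := μ)
    (h := fun x => Δ w x - P x) (L := 0 - ∫ x, P x ∂μ) (fun x => sub_nonneg.2 (hP_le x)) hcut
    cutoff_mem_Icc tendsto_cutoff
    (fun n => by simpa only [sub_mul] using! (hΔ_int n).sub (hP_int n)) (by
      simpa only [hdiff] using (tendsto_integral_mul_laplacian_cutoff hw.continuous hw_int).sub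
        (tendsto_integral_mul_of_tendsto_one hcut cutoff_mem_Icc tendsto_cutoff hP))
  have hΔw : Integrable (Δ w) μ := by
    simpa only [Pi.add_def, sub_add_cancel] using hint.add hP
  refine ⟨hΔw, ?_⟩
  rw [integral_sub hΔw hP] at hintegral
  linarith

end Cutoff

theorem continuous_gradient {E : Type*} [NormedAddCommGroup E] [InnerProductSpace ℝ E]
    [CompleteSpace E] {u : E → ℝ} (hu : ContDiff ℝ 1 u) : Continuous (gradient u) :=
  (toDual ℝ E).symm.continuous.comp (hu.continuous_fderiv one_ne_zero)

section Energy

variable {E : Type*} [NormedAddCommGroup E] [MeasurableSpace E] [BorelSpace E] {μ : Measure E}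

theorem integrable_of_isBigO_norm_rpow_neg [NormedSpace ℝ E] [FiniteDimensional ℝ E]
    [μ.IsAddHaarMeasure] {h : E → ℝ} {r : ℝ} (hh : LocallyIntegrable h μ) (hr : finrank ℝ E < r)
    (hhO : h =O[cocompact E] fun x => ‖x‖ ^ (-r)) : Integrable h μ := by
  have hr_pos : 0 < r := (Nat.cast_nonneg _).trans_lt hr
  have hcompare : (fun x : E => ‖x‖ ^ (-r)) =O[cocompact E] fun x => (1 + ‖x‖) ^ (-r) := by
    refine .of_bound (2 ^ r) ?_
    filter_upwards [tendsto_norm_cocompact_atTop.eventually_ge_atTop 1] with x hx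
    have hx_pos : 0 < ‖x‖ := one_pos.trans_le hx
    rw [Real.norm_of_nonneg (by positivity), Real.norm_of_nonneg (by positivity),
      Real.rpow_neg hx_pos.le, Real.rpow_neg (by positivity), ← div_eq_mul_inv,
      inv_le_iff_one_le_mul₀ (by positivity), div_mul_eq_mul_div, one_le_div (by positivity),
      ← Real.mul_rpow two_pos.le hx_pos.le]
    gcongr
    linarith
  exact hh.integrable_of_isBigO_cocompact (hhO.trans hcompare)
    ((integrable_one_add_norm hr).integrableAtFilter _)

theorem integrable_mul_sq_of_isBigO [NormedSpace ℝ E] [FiniteDimensional ℝ E]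
    [μ.IsAddHaarMeasure] {k u : E → ℝ} {p β : ℝ} (hk : Continuous k) (hu : Continuous u)
    (hkO : k =O[cocompact E] fun x => ‖x‖ ^ (-p)) (huO : u =O[cocompact E] fun x => ‖x‖ ^ (-β))
    (hβ : finrank ℝ E < p + 2 * β) : Integrable (fun x => k x * u x ^ 2) μ := by
  refine integrable_of_isBigO_norm_rpow_neg (hk.mul (hu.pow 2)).locallyIntegrable hβ ?_
  refine (hkO.mul (huO.pow 2)).congr' .rfl ?_
  filter_upwards [tendsto_norm_cocompact_atTop.eventually_gt_atTop 0] with x hx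
  rw [← Real.rpow_mul_natCast hx.le, ← Real.rpow_add hx]
  congr 1
  push_cast
  ring

variable [InnerProductSpace ℝ E] [FiniteDimensional ℝ E] [μ.IsAddHaarMeasure]
  {V P g u : E → ℝ}

theorem integral_norm_gradient_sq_eq_neg (hu : ContDiff ℝ 2 u)
    (hu_int : Integrable (fun x => u x ^ 2 / (1 + ‖x‖ ^ 2)) μ) (hP : Integrable P μ)
    (hP_le : ∀ x, P x ≤ u x * Δ u x) :
    Integrable (fun x => ‖gradient u x‖ ^ 2) μ ∧ Integrable (fun x => u x * Δ u x) μ ∧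
      ∫ x, ‖gradient u x‖ ^ 2 ∂μ = -∫ x, u x * Δ u x ∂μ := by
  have hΔ (x : E) : Δ (fun y => u y ^ 2) x = 2 * (‖gradient u x‖ ^ 2 + u x * Δ u x) :=
    laplacian_sq hu.contDiffAt
  obtain ⟨hΔ_int, hΔ_integral⟩ := integrable_laplacian_and_integral_eq_zero (hu.pow 2) hu_int
    (hP.const_mul 2) fun x => by rw [hΔ]; linarith [hP_le x, sq_nonneg ‖gradient u x‖]
  have hgrad : Integrable (fun x => ‖gradient u x‖ ^ 2) μ := by
    refine ((hΔ_int.const_mul (1 / 2)).sub hP).mono'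
      ((continuous_gradient (hu.of_le one_le_two)).norm.pow 2).aestronglyMeasurable
      (.of_forall fun x => ?_)
    rw [Real.norm_of_nonneg (sq_nonneg _), Pi.sub_apply, hΔ]
    linarith [hP_le x]
  have huΔ : Integrable (fun x => u x * Δ u x) μ :=
    ((hΔ_int.const_mul (1 / 2)).sub hgrad).congr (.of_forall fun x => by
      simp only [Pi.sub_apply, hΔ]
      ring)
  refine ⟨hgrad, huΔ, ?_⟩
  simp only [hΔ] at hΔ_integral
  rw [integral_const_mul, integral_add hgrad huΔ] at hΔ_integral
  linarith

theorem integral_norm_gradient_sq_add_integral_mul (hu : ContDiff ℝ 2 u) (hu_nonneg : 0 ≤ u)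
    (hV : Continuous V) (hg : ∀ x, 0 ≤ g x) (hΔ : ∀ x, -Δ u x = V x * u x - g x)
    (hu_int : Integrable (fun x => u x ^ 2 / (1 + ‖x‖ ^ 2)) μ)
    (hV_int : Integrable (fun x => (V x)⁺ * u x ^ 2) μ) :
    Integrable (fun x => ‖gradient u x‖ ^ 2) μ ∧ Integrable (fun x => V x * u x ^ 2) μ ∧
      Integrable (fun x => g x * u x) μ ∧
      ∫ x, ‖gradient u x‖ ^ 2 ∂μ + ∫ x, g x * u x ∂μ = ∫ x, V x * u x ^ 2 ∂μ := by
  have huΔ (x : E) : u x * Δ u x = g x * u x - V x * u x ^ 2 := by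
    linear_combination -u x * hΔ x
  have hsplit (x : E) : u x * Δ u x + (V x)⁺ * u x ^ 2 = g x * u x + (V x)⁻ * u x ^ 2 := by
    linear_combination huΔ x + u x ^ 2 * posPart_sub_negPart (V x)
  have hgu (x : E) : 0 ≤ g x * u x := mul_nonneg (hg x) (hu_nonneg x)
  have hVu (x : E) : 0 ≤ (V x)⁻ * u x ^ 2 := mul_nonneg (negPart_nonneg _) (sq_nonneg _)
  obtain ⟨hgrad, huΔ_int, hgrad_eq⟩ := integral_norm_gradient_sq_eq_neg hu hu_int hV_int.neg
    fun x => by rw [Pi.neg_apply]; linarith [hsplit x, hgu x, hVu x]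
  have hVneg : Integrable (fun x => (V x)⁻ * u x ^ 2) μ := by
    refine (huΔ_int.add hV_int).mono'
      ((hV.neg.max continuous_const).mul (hu.continuous.pow 2)).aestronglyMeasurable
      (.of_forall fun x => ?_)
    rw [Real.norm_of_nonneg (hVu x), Pi.add_apply, hsplit]
    exact le_add_of_nonneg_left (hgu x)
  have hV_sq : Integrable (fun x => V x * u x ^ 2) μ := by
    simpa only [Pi.sub_def, ← sub_mul, posPart_sub_negPart] using hV_int.sub hVneg
  have hg_int : Integrable (fun x => g x * u x) μ := by
    simpa only [Pi.add_def, huΔ, sub_add_cancel] using huΔ_int.add hV_sq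
  refine ⟨hgrad, hV_sq, hg_int, ?_⟩
  simp only [hgrad_eq, huΔ, integral_sub hg_int hV_sq]
  ring

theorem integral_norm_gradient_sq_add_integral_mul_of_isBigO {α : ℝ} (hE : 3 ≤ finrank ℝ E)
    (hα : 0 < α) (hu : ContDiff ℝ 2 u) (hu_nonneg : 0 ≤ u) (hu_lim : Tendsto u (cocompact E) (𝓝 0))
    (hV : Continuous V) (hV_decay : (fun x => (V x)⁺) =O[cocompact E] fun x => ‖x‖ ^ (-2 - α))
    (hg : ∀ x, 0 ≤ g x) (hΔ : ∀ x, -Δ u x = V x * u x - g x) :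
    Integrable (fun x => ‖gradient u x‖ ^ 2) μ ∧ Integrable (fun x => V x * u x ^ 2) μ ∧
      Integrable (fun x => g x * u x) μ ∧
      ∫ x, ‖gradient u x‖ ^ 2 ∂μ + ∫ x, g x * u x ∂μ = ∫ x, V x * u x ^ 2 ∂μ := by
  have hdim : (3 : ℝ) ≤ finrank ℝ E := by exact_mod_cast hE
  -- Integrability of `u ^ 2 / ‖x‖ ^ 2` at infinity needs `β > (n - 2) / 2`, the comparison
  -- `β < n - 2`.
  set β : ℝ := 3 / 4 * (finrank ℝ E - 2)
  have huO : u =O[cocompact E] fun x => ‖x‖ ^ (-β) := by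
    refine isBigO_norm_rpow_of_neg_laplacian_le hu hu_nonneg hu_lim hα hV_decay
      (by simp only [β]; linarith) (by simp only [β]; linarith) (.of_forall fun x => ?_)
    have hV_le := mul_le_mul_of_nonneg_right (le_posPart (V x)) (hu_nonneg x)
    linarith [hΔ x, hg x]
  have hweight : (fun x : E => (1 + ‖x‖ ^ 2)⁻¹) =O[cocompact E] fun x => ‖x‖ ^ (-2 : ℝ) := by
    refine .of_bound 1 ?_
    filter_upwards [tendsto_norm_cocompact_atTop.eventually_gt_atTop 0] with x hx
    rw [one_mul, Real.norm_of_nonneg (by positivity), Real.norm_of_nonneg (by positivity),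
      Real.rpow_neg hx.le, Real.rpow_two]
    gcongr
    linarith
  refine integral_norm_gradient_sq_add_integral_mul hu hu_nonneg hV hg hΔ ?_ ?_
  · have hweight_cont : Continuous fun x : E => (1 + ‖x‖ ^ 2)⁻¹ :=
      (by fun_prop : Continuous fun x : E => 1 + ‖x‖ ^ 2).inv₀ fun x => by positivity
    simpa only [div_eq_inv_mul] using integrable_mul_sq_of_isBigO hweight_cont hu.continuous
      hweight huO (by simp only [β]; linarith)
  · exact integrable_mul_sq_of_isBigO (p := 2 + α) (hV.max continuous_const) hu.continuous
      (by simpa only [neg_add'] using hV_decay) huO (by simp only [β]; linarith)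

theorem stmt14_general {f : ℝ → ℝ} {α lam : ℝ} (hE : 3 ≤ finrank ℝ E) (hα : 0 < α)
    (hV : Continuous V)
    (hV_decay : (fun x => (V x)⁺) =O[cocompact E] fun x => ‖x‖ ^ (-2 - α))
    (hf : ∀ t, 0 < t → 0 < f t) (hlam : 0 < lam) (hu : ContDiff ℝ 2 u) (hu_pos : ∀ x, 0 < u x)
    (hu_lim : Tendsto u (cocompact E) (𝓝 0)) (hΔ : ∀ x, -Δ u x = lam * (V x * u x - f (u x))) :
    Integrable (fun x => ‖gradient u x‖ ^ 2) μ ∧ Integrable (fun x => V x * u x ^ 2) μ ∧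
      ∫ x, ‖gradient u x‖ ^ 2 ∂μ < lam * ∫ x, V x * u x ^ 2 ∂μ := by
  have hdecay : (fun x => (lam * V x)⁺) =O[cocompact E] fun x => ‖x‖ ^ (-2 - α) := by
    simpa only [posPart_def, mul_max_of_nonneg _ _ hlam.le, mul_zero] using
      hV_decay.const_mul_left lam
  have habs (x : E) : 0 < lam * f (u x) := mul_pos hlam (hf _ (hu_pos x))
  obtain ⟨hgrad, hV_int, hf_int, henergy⟩ :=
    integral_norm_gradient_sq_add_integral_mul_of_isBigO (μ := μ) hE hα hu
      (fun x => (hu_pos x).le) hu_lim (hV.const_mul lam) hdecay (fun x => (habs x).le)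
      fun x => by rw [hΔ]; ring
  have hf_pos : 0 < ∫ x, lam * f (u x) * u x ∂μ := by
    have hpos (x : E) : 0 < lam * f (u x) * u x := mul_pos (habs x) (hu_pos x)
    refine (integral_pos_iff_support_of_nonneg (fun x => (hpos x).le) hf_int).2 ?_
    rw [Function.support_eq_univ fun x => (hpos x).ne']
    exact Measure.measure_univ_pos.2 (NeZero.ne μ)
  simp only [mul_assoc, integral_const_mul] at hV_int henergy hf_pos
  exact ⟨hgrad, (integrable_const_mul_iff hlam.ne'.isUnit _).1 hV_int, by linarith⟩

end Energy

theorem CondVDecay.exists_isBigO {N : ℕ} {V : Euc N → ℝ} (hV : CondVDecay N V) :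
    ∃ α : ℝ, 0 < α ∧ (fun x => (V x)⁺) =O[cocompact (Euc N)] fun x => ‖x‖ ^ (-2 - α) := by
  obtain ⟨A, α, -, hα, hA⟩ := hV
  refine ⟨α, hα, .of_bound A ?_⟩
  filter_upwards [tendsto_norm_cocompact_atTop.eventually_gt_atTop 0] with x hx
  rw [Real.norm_of_nonneg (posPart_nonneg _), Real.norm_of_nonneg (by positivity)]
  exact hA x (norm_pos_iff.1 hx)

theorem CondF.pos {N : ℕ} {V : Euc N → ℝ} {f : ℝ → ℝ} (hf : CondF N V f) {t : ℝ} (ht : 0 < t) :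
    0 < f t := by
  obtain ⟨-, hf_nonneg, -, -, -, hmono, -⟩ := hf
  have hlt : f (t / 2) / (t / 2) < f t / t := hmono (half_pos ht) ht (half_lt_self ht)
  have hhalf : 0 ≤ f (t / 2) / (t / 2) :=
    div_nonneg (hf_nonneg _ (half_pos ht).le) (half_pos ht).le
  exact (div_pos_iff_of_pos_right ht).1 (hhalf.trans_lt hlt)

/-- for any solution `u` of `(P_λ)`, both `∫ |∇u|²` and `∫ V u²` are finite and
`∫ |∇u|² < λ ∫ V u²`. -/
theorem stmt14 (N : ℕ) (hN : 3 ≤ N) (V V₁ V₂ : Euc N → ℝ)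
    (hV : CondV N V V₁ V₂) (hdec : CondVDecay N V)
    (f : ℝ → ℝ) (hf : CondF N V f)
    (lam : ℝ) (hlam : 0 < lam)
    (u : Euc N → ℝ) (hu : IsSolution N V f lam u) :
    Integrable (fun x : Euc N => ‖gradient u x‖ ^ 2) ∧
    Integrable (fun x : Euc N => V x * u x ^ 2) ∧
    (∫ x : Euc N, ‖gradient u x‖ ^ 2) < lam * ∫ x : Euc N, V x * u x ^ 2 := by
  obtain ⟨⟨C, β, hβ, -, hholder⟩, -⟩ := hV
  obtain ⟨α, hα, hdecay⟩ := hdec.exists_isBigO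
  exact stmt14_general (by simpa using hN) hα (hholder.continuous hβ) hdecay (fun _ => hf.pos) hlam
    hu.smooth hu.pos hu.decay (by simpa only [lap_eq_laplacian hu.smooth] using hu.eqn)

end
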